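/- arXiv:2012.02563 — 2 statements merged into one kernel-verified Lean document; each statement's English description precedes it below -/
import Mathlib

section
/- For every nonnegative integer n and every complex number x, ∑_{k=0}^{n} C(n,k)^2 · C(x,k) · C(x,n−k) = ∑_{k=0}^{n} C(x,n−k) · C(x+k,k) · C(2(n−k),n) · C(n,k). -/
/-- The generalized binomial coefficient `x(x-1)⋯(x-j+1)/j!` for complex `x`. -/
noncomputable def cchoose (x : ℂ) (j : ℕ) : ℂ :=
  (∏ i ∈ Finset.range j, (x - i)) / (j.factorial : ℂ)

/-!
Put `m = n - k` and expand `C(2m, n)` by a Vandermonde convolution over `s + a = m`. The triples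
`(k, s, a)` with `k + s + a = n` may then be summed first over `k + s = l`, with `a = n - l` held
fixed. After multinomial rearrangements the inner sum is
`∑ C(a, k) C(x - a, s) C(x + k, k) = C(n, l) C(x, l)`, an instance of the Pfaff–Saalschütz
summation, and what remains is the left-hand side.
-/

theorem choose_mul_choose_sub_comm (n k l : ℕ) :
    n.choose k * (n - k).choose l = n.choose l * (n - l).choose k := by
  have hk := Nat.choose_mul (n := n) (Nat.le_add_right k l)
  have hl := Nat.choose_mul (n := n) (Nat.le_add_left l k)
  rw [Nat.add_sub_cancel_left] at hk
  rw [Nat.add_sub_cancel, ← Nat.choose_symm_add] at hl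
  exact hk.symm.trans hl

section

open Finset

theorem sum_antidiagonal_assoc {A M : Type*} [AddMonoid A] [HasAntidiagonal A] [AddCommMonoid M]
    (f : A → A → A → M) (n : A) :
    ∑ p ∈ antidiagonal n, ∑ q ∈ antidiagonal p.2, f p.1 q.1 q.2 =
      ∑ p ∈ antidiagonal n, ∑ q ∈ antidiagonal p.1, f q.1 q.2 p.2 := by
  simp only [sum_sigma']
  apply sum_nbij' (fun ⟨⟨a, _⟩, ⟨b, c⟩⟩ ↦ ⟨(a + b, c), (a, b)⟩)
    (fun ⟨⟨_, c⟩, ⟨a, b⟩⟩ ↦ ⟨(a, b + c), (b, c)⟩) <;>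
    · rintro ⟨⟨_, _⟩, ⟨_, _⟩⟩ h
      obtain ⟨rfl, rfl⟩ := by simpa only [mem_sigma, HasAntidiagonal.mem_antidiagonal] using h
      simp [add_assoc]

variable {R : Type*} [CommRing R] [BinomialRing R]

theorem ringChoose_add_mul_choose (x : R) (i j : ℕ) :
    Ring.choose x (i + j) * ((i + j).choose i : R) = Ring.choose x i * Ring.choose (x - i) j := by
  have h := Ring.choose_smul_choose x (Nat.le_add_right i j)
  rwa [Nat.add_sub_cancel_left, nsmul_eq_mul, mul_comm] at h

theorem ringChoose_add_natCast_eq_sum_antidiagonal (x : R) (m k : ℕ) :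
    Ring.choose (x + m) (k + m) =
      ∑ p ∈ antidiagonal m, (m.choose p.1 : R) * Ring.choose x (k + p.1) := by
  induction m generalizing k with
  | zero => simp
  | succ m ih =>
    have pascal : Ring.choose (x + (m + 1 : ℕ)) (k + (m + 1)) =
        Ring.choose (x + m) (k + m) + Ring.choose (x + m) (k + 1 + m) := by
      rw [Nat.cast_succ, ← add_assoc, ← add_assoc, Ring.choose_succ_succ, add_right_comm k]
    rw [pascal, ih, ih, sum_antidiagonal_choose_succ_mul fun i _ ↦ Ring.choose x (k + i)]
    congr 1
    refine sum_congr rfl fun p hp ↦ ?_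
    rw [← Nat.choose_symm_of_eq_add (HasAntidiagonal.mem_antidiagonal.mp hp).symm,
      add_assoc, add_comm 1]

theorem ringChoose_add_natCast_self (x : R) (m : ℕ) :
    Ring.choose (x + m) m =
      ∑ p ∈ antidiagonal m, (m.choose p.1 : R) * Ring.choose x p.1 := by
  simpa only [zero_add] using ringChoose_add_natCast_eq_sum_antidiagonal x m 0

theorem pfaff_saalschutz_ringChoose (x y : R) (l : ℕ) :
    ∑ p ∈ antidiagonal l,
        Ring.choose y p.1 * Ring.choose (x - y) p.2 * Ring.choose (x + p.1) p.1 =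
      Ring.choose (y + l) l * Ring.choose x l := by
  calc
    _ = ∑ p ∈ antidiagonal l, ∑ q ∈ antidiagonal p.1, Ring.choose x q.1 *
          (Ring.choose y q.1 * (Ring.choose (y - q.1) q.2 * Ring.choose (x - y) p.2)) := by
      refine sum_congr rfl fun p _ ↦ ?_
      rw [ringChoose_add_natCast_self, mul_sum]
      refine sum_congr rfl fun q hq ↦ ?_
      have split := ringChoose_add_mul_choose y q.1 q.2
      rw [HasAntidiagonal.mem_antidiagonal.mp hq] at split
      linear_combination Ring.choose x q.1 * Ring.choose (x - y) p.2 * split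
    _ = ∑ p ∈ antidiagonal l, Ring.choose x p.1 * (Ring.choose y p.1 *
          ∑ q ∈ antidiagonal p.2, Ring.choose (y - p.1) q.1 * Ring.choose (x - y) q.2) := by
      simp only [mul_sum]
      exact (sum_antidiagonal_assoc (fun i j m ↦ Ring.choose x i *
        (Ring.choose y i * (Ring.choose (y - i) j * Ring.choose (x - y) m))) l).symm
    _ = ∑ p ∈ antidiagonal l, (l.choose p.1 : R) * Ring.choose y p.1 * Ring.choose x l := by
      refine sum_congr rfl fun p hp ↦ ?_
      have merge := ringChoose_add_mul_choose x p.1 p.2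
      rw [HasAntidiagonal.mem_antidiagonal.mp hp] at merge
      rw [← Ring.add_choose_eq p.2 (Commute.all _ _), add_comm, sub_add_sub_cancel]
      linear_combination -Ring.choose y p.1 * merge
    _ = _ := by rw [← sum_mul, ← ringChoose_add_natCast_self]

theorem choose_two_mul_eq_sum_antidiagonal (k m : ℕ) :
    (2 * m).choose (k + m) = ∑ p ∈ antidiagonal m, m.choose p.1 * m.choose (k + p.1) := by
  have h := ringChoose_add_natCast_eq_sum_antidiagonal (m : ℤ) m k
  rw [← Nat.cast_add, ← two_mul] at h
  simp only [Ring.choose_natCast] at h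
  exact_mod_cast h

theorem strehl_summand_regroup (x : R) (k s a : ℕ) :
    Ring.choose x (s + a) * ((k + (s + a)).choose k : R) *
        (((s + a).choose s : R) * ((s + a).choose (k + s) : R)) =
      ((k + s + a).choose (k + s) : R) * Ring.choose x a *
        (Ring.choose (a : R) k * Ring.choose (x - a) s) := by
  have hx := ringChoose_add_mul_choose x a s
  rw [add_comm a s, ← Nat.choose_symm_add] at hx
  have hn := congrArg (Nat.cast (R := R)) (choose_mul_choose_sub_comm (k + s + a) k (k + s))
  rw [Nat.add_sub_cancel_left, add_assoc k s a, Nat.add_sub_cancel_left, ← add_assoc] at hn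
  push_cast at hn
  rw [Ring.choose_natCast, ← add_assoc k s a]
  linear_combination ((s + a).choose (k + s) : R) * ((k + s + a).choose k : R) * hx +
    Ring.choose x a * Ring.choose (x - a) s * hn

theorem general_strehl_identity_general (n : ℕ) (x : R) :
    ∑ p ∈ antidiagonal n, (n.choose p.1 : R) ^ 2 * Ring.choose x p.1 * Ring.choose x p.2 =
      ∑ p ∈ antidiagonal n, Ring.choose x p.2 * Ring.choose (x + p.1) p.1 *
        ((2 * p.2).choose n : R) * (n.choose p.1 : R) := by
  symm
  calc
    _ = ∑ p ∈ antidiagonal n, ∑ q ∈ antidiagonal p.2,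
          ((p.1 + q.1 + q.2).choose (p.1 + q.1) : R) * Ring.choose x q.2 *
            (Ring.choose (q.2 : R) p.1 * Ring.choose (x - q.2) q.1 *
              Ring.choose (x + p.1) p.1) := by
      refine sum_congr rfl fun ⟨k, m⟩ hp ↦ ?_
      obtain rfl := HasAntidiagonal.mem_antidiagonal.mp hp
      rw [choose_two_mul_eq_sum_antidiagonal, Nat.cast_sum, mul_sum, sum_mul]
      refine sum_congr rfl fun ⟨s, a⟩ hq ↦ ?_
      obtain rfl := HasAntidiagonal.mem_antidiagonal.mp hq
      push_cast
      linear_combination Ring.choose (x + k) k * strehl_summand_regroup x k s a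
    _ = ∑ p ∈ antidiagonal n, ((p.1 + p.2).choose p.1 : R) * Ring.choose x p.2 *
          ∑ q ∈ antidiagonal p.1, Ring.choose (p.2 : R) q.1 * Ring.choose (x - p.2) q.2 *
            Ring.choose (x + q.1) q.1 := by
      simp only [mul_sum]
      refine (sum_antidiagonal_assoc (fun k s a ↦ ((k + s + a).choose (k + s) : R) *
        Ring.choose x a * (Ring.choose (a : R) k * Ring.choose (x - a) s *
          Ring.choose (x + k) k)) n).trans (sum_congr rfl fun p _ ↦ sum_congr rfl fun q hq ↦ ?_)
      rw [HasAntidiagonal.mem_antidiagonal.mp hq]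
    _ = _ := by
      refine sum_congr rfl fun p hp ↦ ?_
      rw [pfaff_saalschutz_ringChoose, ← Nat.cast_add, Ring.choose_natCast, add_comm p.2,
        HasAntidiagonal.mem_antidiagonal.mp hp]
      ring

end

theorem cchoose_eq_ringChoose (x : ℂ) (j : ℕ) : cchoose x j = Ring.choose x j := by
  rw [cchoose, Ring.choose_eq_smul, ← Polynomial.aeval_eq_smeval, ← Polynomial.eval_map_algebraMap,
    descPochhammer_map, descPochhammer_eval_eq_prod_range, smul_eq_mul, div_eq_inv_mul]

theorem general_strehl_identity (n : ℕ) (x : ℂ) :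
    ∑ k ∈ Finset.range (n + 1),
        (n.choose k : ℂ) ^ 2 * cchoose x k * cchoose x (n - k) =
      ∑ k ∈ Finset.range (n + 1),
        cchoose x (n - k) * cchoose (x + (k : ℂ)) k * ((2 * (n - k)).choose n : ℂ) *
          (n.choose k : ℂ) := by
  simpa only [cchoose_eq_ringChoose, Finset.Nat.sum_antidiagonal_eq_sum_range_succ_mk]
    using general_strehl_identity_general n x
end

section
/- For every nonnegative integer n, ∑_{k=0}^{n} C(n,k)^2 · C(2k,k) · C(2(n−k),n−k) = ∑_{k=0}^{n} (−1)^k · C(2k,k) · C(2(n−k),n−k) · C(2(n−k),n) · C(n,k), where both sides are integers (the left-hand side is the n-th Domb number). -/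
/-!
The identity is the case `x = -1/2`, up to the factor `(-1/4) ^ n`, of an identity in a binomial
ring. Expanding with Nanjundiah's formula
`C(x,k) C(x,n-k) = ∑ i, C(k,i) C(n-k,i) C(x+i,n)` and exchanging the two sums, the coefficient of
`C(x+i,n)` on the left becomes `∑ k, C(n,k)² C(k,i) C(n-k,i)`. Extracting `C(n,i)` from both
`C(n,k) C(k,i)` and `C(n,k) C(n-k,i)` leaves a Vandermonde sum, so this coefficient is
`C(n,i)² C(2(n-i),n)`. On the right, `C(x,n-i) C(x+i,i) = C(n,i) C(x+i,n)`.
-/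

open Finset

theorem choose_mul_choose_eq_choose_mul_choose_sub {m i : ℕ} (hi : i ≤ m) (b : ℕ) :
    m.choose i * i.choose b = m.choose b * (m - b).choose (m - i) := by
  obtain hb | hb := le_or_gt b i
  · rw [Nat.choose_mul hb, ← Nat.choose_symm (Nat.sub_le_sub_right hi b),
      Nat.sub_sub_sub_cancel_right hb]
  · rw [Nat.choose_eq_zero_of_lt hb, mul_zero, eq_comm, mul_eq_zero, Nat.choose_eq_zero_iff,
      Nat.choose_eq_zero_iff]
    lia

theorem sum_choose_mul_choose_mul_choose (m n b : ℕ) :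
    ∑ i ∈ range (m + 1), m.choose i * n.choose i * i.choose b =
      m.choose b * (m - b + n).choose m := by
  calc
    _ = ∑ i ∈ range (m + 1), m.choose b * (n.choose i * (m - b).choose (m - i)) :=
      sum_congr rfl fun i hi ↦ by
        linear_combination n.choose i *
          choose_mul_choose_eq_choose_mul_choose_sub (mem_range_succ_iff.mp hi) b
    _ = _ := by
      rw [← mul_sum, add_comm (m - b), Nat.add_choose_eq,
        Nat.sum_antidiagonal_eq_sum_range_succ_mk]

theorem sum_choose_sq_mul_choose_mul_choose (n i : ℕ) :
    ∑ k ∈ range (n + 1), n.choose k ^ 2 * (k.choose i * (n - k).choose i) =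
      n.choose i ^ 2 * (2 * (n - i)).choose n := by
  calc
    _ = ∑ k ∈ range (n + 1), n.choose i ^ 2 * ((n - i).choose k * (n - i).choose (n - k)) := by
      refine sum_congr rfl fun k hk ↦ ?_
      have hkn : k ≤ n := mem_range_succ_iff.mp hk
      have hchoose_left := choose_mul_choose_eq_choose_mul_choose_sub hkn i
      have hchoose_right := choose_mul_choose_eq_choose_mul_choose_sub (Nat.sub_le n k) i
      rw [Nat.choose_symm hkn, Nat.sub_sub_self hkn] at hchoose_right
      linear_combination n.choose k * (n - k).choose i * hchoose_left +
        n.choose i * (n - i).choose (n - k) * hchoose_right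
    _ = _ := by
      rw [← mul_sum, two_mul, Nat.add_choose_eq, Nat.sum_antidiagonal_eq_sum_range_succ_mk]

section BinomialRing

variable {R : Type*} [CommRing R] [BinomialRing R]

theorem ringChoose_mul_ringChoose_eq_sum_antidiagonal (x : R) (m n : ℕ) :
    Ring.choose x m * Ring.choose x n =
      ∑ ab ∈ antidiagonal (m + n), m.choose ab.2 * ab.1.choose m * Ring.choose x ab.1 := by
  have hvanish : ∀ a ∈ range m,
      (m.choose (m + n - a) * a.choose m * Ring.choose x a : R) = 0 :=
    fun a ha ↦ by simp [Nat.choose_eq_zero_of_lt (mem_range.mp ha)]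
  rw [Nat.sum_antidiagonal_eq_sum_range_succ_mk, Nat.succ_eq_add_one, add_assoc, sum_range_add,
    sum_eq_zero hvanish, zero_add]
  -- Vandermonde for `x = (x - m) + m`; then `C(x,m) C(x-m,a) = C(m+a,m) C(x,m+a)`.
  nth_rw 2 [← sub_add_cancel x (m : R)]
  rw [Ring.add_choose_eq n (Nat.cast_commute m _).symm,
    Nat.sum_antidiagonal_eq_sum_range_succ_mk, mul_sum]
  refine sum_congr rfl fun a _ ↦ ?_
  have hmul := Ring.choose_smul_choose x (Nat.le_add_right m a)
  rw [Nat.add_sub_cancel_left, nsmul_eq_mul] at hmul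
  rw [Ring.choose_natCast, Nat.add_sub_add_left]
  linear_combination -(m.choose (n - a) : R) * hmul

theorem sum_choose_mul_choose_mul_ringChoose_add (x : R) (m n : ℕ) :
    ∑ i ∈ range (m + 1), (m.choose i * n.choose i * Ring.choose (x + i) (m + n) : R) =
      Ring.choose x m * Ring.choose x n := by
  simp only [Ring.add_choose_eq _ (Nat.cast_commute _ x).symm, Ring.choose_natCast, mul_sum]
  rw [sum_comm, ringChoose_mul_ringChoose_eq_sum_antidiagonal]
  refine sum_congr rfl fun ⟨a, b⟩ hab ↦ ?_
  have hcoeff : ∑ i ∈ range (m + 1), m.choose i * n.choose i * i.choose b =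
      m.choose b * a.choose m := by
    rw [sum_choose_mul_choose_mul_choose]
    obtain hb | hb := le_or_gt b m
    · rw [show m - b + n = a by have := mem_antidiagonal.mp hab; lia]
    · rw [Nat.choose_eq_zero_of_lt hb, zero_mul, zero_mul]
  rw [← Nat.cast_mul, ← hcoeff, Nat.cast_sum, sum_mul]
  exact sum_congr rfl fun i _ ↦ by push_cast; ring

theorem ringChoose_sub_mul_ringChoose_add (x : R) {n k : ℕ} (hk : k ≤ n) :
    Ring.choose x (n - k) * Ring.choose (x + k) k = n.choose k * Ring.choose (x + k) n := by
  have h := Ring.choose_add_smul_choose x (n - k) k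
  rw [Nat.sub_add_cancel hk, nsmul_eq_mul] at h
  rw [h, mul_comm]

theorem domb_identity_general (x : R) (n : ℕ) :
    ∑ k ∈ range (n + 1), (n.choose k : R) ^ 2 * Ring.choose x k * Ring.choose x (n - k) =
      ∑ k ∈ range (n + 1), Ring.choose x (n - k) * Ring.choose (x + k) k *
        (2 * (n - k)).choose n * n.choose k := by
  calc
    _ = ∑ k ∈ range (n + 1), ∑ i ∈ range (n + 1),
        ((n.choose k ^ 2 * (k.choose i * (n - k).choose i) : ℕ) : R) * Ring.choose (x + i) n := by
      refine sum_congr rfl fun k hk ↦ ?_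
      have hkn : k ≤ n := mem_range_succ_iff.mp hk
      rw [mul_assoc, ← sum_choose_mul_choose_mul_ringChoose_add, Nat.add_sub_cancel' hkn,
        ← eventually_constant_sum (N := k + 1) (n := n + 1)
          (fun i hi ↦ by simp [Nat.choose_eq_zero_of_lt hi]) (by lia), mul_sum]
      exact sum_congr rfl fun i _ ↦ by push_cast; ring
    _ = ∑ i ∈ range (n + 1), ((n.choose i ^ 2 * (2 * (n - i)).choose n : ℕ) : R) *
        Ring.choose (x + i) n := by
      rw [sum_comm]
      simp only [← sum_mul, ← Nat.cast_sum, sum_choose_sq_mul_choose_mul_choose]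
    _ = _ := sum_congr rfl fun i hi ↦ by
      rw [ringChoose_sub_mul_ringChoose_add x (mem_range_succ_iff.mp hi)]
      push_cast
      ring

end BinomialRing

section Field

variable {K : Type*} [Field K] [CharZero K]

theorem ringChoose_neg_half (k : ℕ) :
    Ring.choose (-1 / 2 : K) k = (-1 / 4) ^ k * k.centralBinom := by
  induction k with
  | zero => simp
  | succ k ih =>
    have hk : (k + 1 : K) ≠ 0 := by exact_mod_cast k.succ_ne_zero
    have hbinom : (k + 1 : K) * (k + 1).centralBinom = 2 * (2 * k + 1) * k.centralBinom := by
      exact_mod_cast k.succ_mul_centralBinom_succ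
    have hchoose : (k + 1 : K) * Ring.choose (-1 / 2 : K) (k + 1) =
        Ring.choose (-1 / 2 : K) k * (-1 / 2 - k) := by
      simpa using Ring.choose_smul_choose (-1 / 2 : K) k.le_succ
    apply mul_left_cancel₀ hk
    rw [hchoose, ih]
    linear_combination -(-1 / 4) ^ (k + 1) * hbinom

theorem ringChoose_neg_half_add (k : ℕ) :
    Ring.choose (-1 / 2 + k : K) k = (1 / 4) ^ k * k.centralBinom := by
  have hneg : Ring.choose (-1 / 2 : K) k = (-1) ^ k * Ring.choose (-1 / 2 + k : K) k := by
    have h := Ring.choose_neg (1 / 2 : K) k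
    rwa [← neg_div, show (1 / 2 + k - 1 : K) = -1 / 2 + k by ring, Units.smul_def,
      Int.coe_negOnePow_natCast, zsmul_eq_mul, Int.cast_pow, Int.cast_neg, Int.cast_one] at h
  have hsign : ((-1 : K) ^ k) ≠ 0 := pow_ne_zero k (neg_ne_zero.mpr one_ne_zero)
  apply mul_left_cancel₀ hsign
  rw [← hneg, ringChoose_neg_half, ← mul_assoc, ← mul_pow, neg_one_mul, ← neg_div]

end Field

theorem domb_identity (n : ℕ) :
    ∑ k ∈ Finset.range (n + 1),
        (n.choose k : ℤ) ^ 2 * ((2 * k).choose k : ℤ) * ((2 * (n - k)).choose (n - k) : ℤ) =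
      ∑ k ∈ Finset.range (n + 1),
        (-1 : ℤ) ^ k * ((2 * k).choose k : ℤ) * ((2 * (n - k)).choose (n - k) : ℤ) *
          ((2 * (n - k)).choose n : ℤ) * (n.choose k : ℤ) := by
  have hscale : (-1 / 4 : ℚ) ^ n ≠ 0 := pow_ne_zero n (by norm_num)
  have hsplit {k : ℕ} (hk : k ∈ range (n + 1)) :
      (-1 / 4 : ℚ) ^ n = (-1 / 4) ^ k * (-1 / 4) ^ (n - k) := by
    rw [← pow_add, Nat.add_sub_cancel' (mem_range_succ_iff.mp hk)]
  have hsign (k : ℕ) : (1 / 4 : ℚ) ^ k = (-1 / 4) ^ k * (-1) ^ k := by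
    rw [← mul_pow]; norm_num
  have h := domb_identity_general (-1 / 2 : ℚ) n
  simp only [ringChoose_neg_half, ringChoose_neg_half_add, Nat.centralBinom_eq_two_mul_choose] at h
  rw [← Int.cast_inj (α := ℚ), ← mul_right_inj' hscale]
  push_cast
  rw [mul_sum, mul_sum]
  convert h using 2 with k hk k hk
  · rw [hsplit hk]; ring
  · rw [hsplit hk, hsign]; ring
end
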